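/- Let Γ ≤ Δ be countable discrete groups with [Δ : Γ] = ∞ and let θ be an invariant random subgroup of Γ. If CIND_Γ^Δ(θ) is atomic (has at least one atom), then CIND_Γ^Δ(θ) is the Dirac measure δ_{core_Δ(ker(θ))} concentrated at the subgroup core_Δ(ker(θ)). -/

import Mathlib

open MeasureTheory

namespace IRSPaper


/-! ## Basic setup: the space of subgroups, invariant random subgroups -/

/-- The conjugation action of a group on its space of subgroups: `g • H = gHg⁻¹`. -/
def conjSub {G : Type*} [Group G] (g : G) (H : Subgroup G) : Subgroup G :=
  Subgroup.map ((MulAut.conj g).toMonoidHom) H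

/-- The topology on the space of subgroups of `G`, induced from the product topology
on `G → Bool` (i.e. the topology of `2^G`). -/
noncomputable instance instTopSub (G : Type*) [Group G] : TopologicalSpace (Subgroup G) :=
  TopologicalSpace.induced
    (fun (H : Subgroup G) (g : G) => @decide (g ∈ H) (Classical.dec _)) inferInstance

/-- The Borel σ-algebra on the space of subgroups. -/
noncomputable instance instMeasSub (G : Type*) [Group G] : MeasurableSpace (Subgroup G) :=
  borel _

instance instBorelSub (G : Type*) [Group G] : BorelSpace (Subgroup G) := ⟨rfl⟩

/-- An invariant random subgroup: a Borel probability measure on `Sub(G)` which is invariant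
under the conjugation action of `G`. -/
def IsIRS {G : Type*} [Group G] (θ : Measure (Subgroup G)) : Prop :=
  IsProbabilityMeasure θ ∧ ∀ g : G, Measure.map (conjSub g) θ = θ

/-- The basic set `N_F = {H ∈ Sub(G) : F ⊆ H}`. -/
def NSet {G : Type*} [Group G] (F : Set G) : Set (Subgroup G) :=
  {H : Subgroup G | F ⊆ (H : Set G)}

/-- For `Γ ≤ Δ` and `S ⊆ Δ`, the set of subgroups of `Γ` containing every element of `Γ`
whose image in `Δ` lies in `S`.  When `S = t⁻¹Ft ⊆ Γ`, this is exactly the basic set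
`N_{t⁻¹Ft}^Γ ⊆ Sub(Γ)`. -/
def NpullSet {Δ : Type*} [Group Δ] (Γ : Subgroup Δ) (S : Set Δ) : Set (Subgroup ↥Γ) :=
  {Λ : Subgroup ↥Γ | ∀ x : ↥Γ, (x : Δ) ∈ S → x ∈ Λ}

/-- `T` is a transversal for the left cosets `Δ/Γ`: each left coset `dΓ` contains exactly
one element of `T`. -/
def IsLeftTransversal {Δ : Type*} [Group Δ] (Γ : Subgroup Δ) (T : Set Δ) : Prop :=
  ∀ d : Δ, ∃! t : Δ, t ∈ T ∧ d⁻¹ * t ∈ Γ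

/-- The defining property of the co-induced invariant random subgroup
`ν = CIND_Γ^Δ(θ)` (with respect to the transversal `T`):  for every finite `F ⊆ Δ`,
`ν(N_F) = 0` if `F ⊄ core_Δ(Γ)` and `ν(N_F) = ∏_{t ∈ T} θ(N_{t⁻¹Ft}^Γ)` if `F ⊆ core_Δ(Γ)`. -/
def CindSpec {Δ : Type*} [Group Δ] (Γ : Subgroup Δ) (T : Set Δ)
    (θ : Measure (Subgroup ↥Γ)) (ν : Measure (Subgroup Δ)) : Prop :=
  ∀ F : Finset Δ,
    (¬ (F : Set Δ) ⊆ (Γ.normalCore : Set Δ) → ν (NSet (F : Set Δ)) = 0) ∧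
    ((F : Set Δ) ⊆ (Γ.normalCore : Set Δ) →
      ν (NSet (F : Set Δ)) =
        ∏' t : T, θ (NpullSet Γ ((fun d => (t : Δ)⁻¹ * d * (t : Δ)) '' (F : Set Δ))))

/-- Ergodicity of a (not necessarily probability-) measure-preserving action given by
an explicit family of maps: every invariant measurable set is null or conull. -/
def ErgodicAct {G α : Type*} [MeasurableSpace α] (act : G → α → α) (μ : Measure α) : Prop :=
  ∀ s : Set α, MeasurableSet s → (∀ g : G, act g ⁻¹' s = s) → μ s = 0 ∨ μ sᶜ = 0

/-- Weak mixing of an action: the diagonal action on the square is ergodic. -/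
def WeaklyMixingAct {G α : Type*} [MeasurableSpace α] (act : G → α → α) (μ : Measure α) : Prop :=
  ErgodicAct (fun (g : G) (p : α × α) => (act g p.1, act g p.2)) (μ.prod μ)

/-- A measure is non-atomic (has no atoms) if every singleton is null. -/
def NonAtomicMeasure {α : Type*} [MeasurableSpace α] (μ : Measure α) : Prop :=
  ∀ x : α, μ {x} = 0

/-- The kernel of an IRS `θ` of `Γ`: the set of `γ ∈ Γ` with `θ(N_γ) = 1`.  (For a probability
measure this set is a subgroup; taking `Subgroup.closure` makes it a `Subgroup` on the nose.) -/
def kerIRS {Δ : Type*} [Group Δ] (Γ : Subgroup Δ) (θ : Measure (Subgroup ↥Γ)) : Subgroup ↥Γ :=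
  Subgroup.closure {x : ↥Γ | θ {Λ : Subgroup ↥Γ | x ∈ Λ} = 1}

/-- `core_Δ(ker(θ))`, viewed as a subgroup of `Δ`. -/
def coreKer {Δ : Type*} [Group Δ] (Γ : Subgroup Δ) (θ : Measure (Subgroup ↥Γ)) : Subgroup Δ :=
  ((kerIRS Γ θ).map Γ.subtype).normalCore

/-!
Write `ν` for the co-induced measure. For `F` in the core of `Γ`, `ν(N_F)` is a product of factors
indexed by the cosets `Δ ⧸ Γ`, so finitely many cosets `S` already determine it up to `ε`.
Conjugating by `g` translates the cosets by `g`. As `Δ ⧸ Γ` is infinite, B. H. Neumann's covering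
lemma yields infinitely many pairwise disjoint translates of `S`, and the corresponding conjugates
of `N_F` have pairwise intersections of measure at most `ν(N_F)² + ε`. By Chebyshev's inequality
the frequency of such events is close to `ν(N_F)` at an atom, but along infinitely many of them it
is `0` or `1` there; hence `ν(N_F)` is `0` or `1`. Therefore `ν` is the Dirac measure at
`{x | ν(N_x) = 1}`, the set of `x` all of whose conjugates lie in `ker θ`.
-/

open Filter Topology ProbabilityTheory
open scoped Pointwise

section InfiniteOrbits

variable {G α : Type*} [Group G] [MulAction G α] {S R : Set α}

-- Otherwise `G` would be a finite union of cosets of stabilizers of points of `S`, and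
-- B. H. Neumann's lemma would make one of these stabilizers of finite index.
lemma exists_disjoint_smul_of_infinite_orbits (hS : S.Finite) (hR : R.Finite)
    (horb : ∀ a ∈ S, (MulAction.orbit G a).Infinite) : ∃ g : G, Disjoint (g • S) R := by
  by_contra! hmeet
  have htransport (p : α × α) : ∃ h : G, p.2 ∈ MulAction.orbit G p.1 → h • p.1 = p.2 := by
    by_cases hp : p.2 ∈ MulAction.orbit G p.1
    · exact hp.imp fun h hh _ => hh
    · exact ⟨1, fun hp' => absurd hp' hp⟩
  choose h hh using htransport
  have hcover : ⋃ p ∈ hS.toFinset ×ˢ hR.toFinset,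
      h p • (MulAction.stabilizer G p.1 : Set G) = Set.univ := by
    refine Set.eq_univ_of_forall fun g => ?_
    obtain ⟨_, ⟨a, ha, rfl⟩, hga⟩ := Set.not_disjoint_iff.1 (hmeet g)
    simp only [Set.mem_iUnion]
    refine ⟨(a, g • a), by simpa using ⟨ha, hga⟩, ?_⟩
    rw [mem_leftCoset_iff, SetLike.mem_coe, MulAction.mem_stabilizer_iff, mul_smul,
      inv_smul_eq_iff, hh (a, g • a) ⟨g, rfl⟩]
  obtain ⟨p, hp, hfin⟩ := Subgroup.exists_finiteIndex_of_leftCoset_cover hcover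
  have hpS : p.1 ∈ S := hS.mem_toFinset.1 (Finset.mem_product.1 hp).1
  exact hfin.index_ne_zero ((MulAction.index_stabilizer G p.1).trans (horb _ hpS).ncard)

lemma exists_seq_pairwise_disjoint_smul (hS : S.Finite)
    (horb : ∀ a ∈ S, (MulAction.orbit G a).Infinite) :
    ∃ g : ℕ → G, Pairwise fun i j => Disjoint (g i • S) (g j • S) := by
  have : Std.Symm fun g h : G => Disjoint (g • S) (h • S) := ⟨fun _ _ h => h.symm⟩
  obtain ⟨g, -, hg⟩ := exists_seq_of_forall_finset_exists' (fun _ : G => True)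
    (fun g h => Disjoint (g • S) (h • S)) fun s _ => by
      obtain ⟨h, hh⟩ := exists_disjoint_smul_of_infinite_orbits (R := ⋃ g ∈ s, g • S) hS
        (s.finite_toSet.biUnion fun g _ => hS.smul_set) horb
      exact ⟨h, trivial, fun g hg => (hh.mono_right (Set.subset_biUnion_of_mem hg)).symm⟩
  exact ⟨g, hg⟩

end InfiniteOrbits

section SecondMoment

variable {Ω ι : Type*} [MeasurableSpace Ω] {μ : Measure Ω}

lemma measureReal_singleton_mul_sq_le_variance [IsFiniteMeasure μ] {X : Ω → ℝ} (hX : MemLp X 2 μ)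
    (a : Ω) : μ.real {a} * (X a - μ[X]) ^ 2 ≤ Var[X; μ] := by
  rcases eq_or_ne (X a - μ[X]) 0 with hzero | hne
  · simp [hzero, variance_nonneg]
  have hpos : 0 < |X a - μ[X]| := abs_pos.2 hne
  have hchebyshev : μ {a} ≤ ENNReal.ofReal (Var[X; μ] / |X a - μ[X]| ^ 2) :=
    calc μ {a} ≤ μ {ω | |X a - μ[X]| ≤ |X ω - μ[X]|} :=
          measure_mono (by simp)
      _ ≤ _ := meas_ge_le_variance_div_sq hX hpos
  rw [← sq_abs, ← le_div_iff₀ (by positivity)]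
  exact ENNReal.toReal_le_of_le_ofReal (div_nonneg (variance_nonneg _ _) (sq_nonneg _)) hchebyshev

lemma variance_sum_le_of_covariance_le [IsFiniteMeasure μ] {X : ι → Ω → ℝ} {s : Finset ι}
    {C ε : ℝ} (hX : ∀ i ∈ s, MemLp (X i) 2 μ) (hε : 0 ≤ ε) (hvar : ∀ i ∈ s, Var[X i; μ] ≤ C)
    (hcov : (s : Set ι).Pairwise fun i j => cov[X i, X j; μ] ≤ ε) :
    Var[∑ i ∈ s, X i; μ] ≤ s.card * C + s.card ^ 2 * ε := by
  classical
  calc Var[∑ i ∈ s, X i; μ]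
      = ∑ i ∈ s, ∑ j ∈ s, cov[X i, X j; μ] := variance_sum' hX
    _ ≤ ∑ i ∈ s, ∑ j ∈ s, ((if i = j then C else 0) + ε) := by
        refine Finset.sum_le_sum fun i hi => Finset.sum_le_sum fun j hj => ?_
        split_ifs with hij
        · subst hij
          rw [covariance_self (hX i hi).aemeasurable]
          linarith [hvar i hi]
        · simpa using hcov hi hj hij
    _ = s.card * C + s.card ^ 2 * ε := by
        simp only [Finset.sum_add_distrib, Finset.sum_ite_eq, Finset.sum_ite_mem,
          Finset.inter_self, Finset.sum_const, nsmul_eq_mul]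
        ring

lemma measureReal_singleton_mul_sq_le_of_covariance_le [IsFiniteMeasure μ] {X : ι → Ω → ℝ}
    {s : Set ι} {C ε m q : ℝ} {a : Ω} (hs : s.Infinite) (hε : 0 ≤ ε)
    (hX : ∀ i, MemLp (X i) 2 μ) (hmean : ∀ i, μ[X i] = m) (hvar : ∀ i, Var[X i; μ] ≤ C)
    (hcov : Pairwise fun i j => cov[X i, X j; μ] ≤ ε) (ha : ∀ i ∈ s, X i a = q) :
    μ.real {a} * (q - m) ^ 2 ≤ ε := by
  have hbound (n : ℕ) (hn : 0 < n) : μ.real {a} * (q - m) ^ 2 ≤ C / n + ε := by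
    obtain ⟨t, hts, rfl⟩ := hs.exists_subset_card_eq n
    have hsum : μ[∑ i ∈ t, X i] = t.card * m := by
      simp [integral_finsetSum _ fun i _ => (hX i).integrable one_le_two, hmean]
    have hat : (∑ i ∈ t, X i) a = t.card * q := by
      simp [Finset.sum_apply, Finset.sum_congr rfl fun i hi => ha i (hts hi)]
    have hdev := (measureReal_singleton_mul_sq_le_variance
      (memLp_finsetSum' t fun i _ => hX i) a).trans
      (variance_sum_le_of_covariance_le (fun i _ => hX i) hε (fun i _ => hvar i)
        fun i _ j _ hij => hcov hij)
    rw [hsum, hat] at hdev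
    have hcard : (0 : ℝ) < t.card := by exact_mod_cast hn
    have hsplit : C / t.card + ε = (t.card * C + t.card ^ 2 * ε) / t.card ^ 2 := by field_simp
    rw [hsplit, le_div_iff₀ (pow_pos hcard 2)]
    linarith
  have hlim : Tendsto (fun n : ℕ => C / n + ε) atTop (𝓝 ε) := by
    simpa using (tendsto_const_div_atTop_nhds_zero_nat C).add_const ε
  exact ge_of_tendsto hlim ((eventually_gt_atTop 0).mono hbound)

lemma memLp_indicator_one [IsFiniteMeasure μ] {A : Set Ω} (hA : MeasurableSet A) (r : ENNReal) :
    MemLp (A.indicator (1 : Ω → ℝ)) r μ :=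
  memLp_indicator_const r hA 1 (Or.inr (measure_ne_top μ A))

lemma covariance_indicator_one [IsProbabilityMeasure μ] {A B : Set Ω} (hA : MeasurableSet A)
    (hB : MeasurableSet B) : cov[A.indicator 1, B.indicator 1; μ] =
      μ.real (A ∩ B) - μ.real A * μ.real B := by
  rw [covariance_eq_sub (memLp_indicator_one hA 2) (memLp_indicator_one hB 2),
    ← Set.inter_indicator_one, integral_indicator_one hA, integral_indicator_one hB,
    integral_indicator_one (hA.inter hB)]

-- Infinitely many of the events agree on whether they contain the atom `a`. Their empirical
-- frequency at `a` is then `0` or `1`, whereas its variance is at most `ε` in the limit.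
lemma measureReal_singleton_mul_le_of_inter_le [IsProbabilityMeasure μ] {A : ℕ → Set Ω} {ε p : ℝ}
    (hA : ∀ i, MeasurableSet (A i)) (hp : ∀ i, μ.real (A i) = p) (hε : 0 ≤ ε)
    (hinter : Pairwise fun i j => μ.real (A i ∩ A j) ≤ p ^ 2 + ε) (a : Ω) :
    μ.real {a} * p ^ 2 ≤ ε ∨ μ.real {a} * (1 - p) ^ 2 ≤ ε := by
  have hdeviation {s : Set ℕ} {q : ℝ} (hs : s.Infinite)
      (hq : ∀ i ∈ s, (A i).indicator (1 : Ω → ℝ) a = q) : μ.real {a} * (q - p) ^ 2 ≤ ε := by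
    refine measureReal_singleton_mul_sq_le_of_covariance_le (C := p) hs hε
      (fun i => memLp_indicator_one (hA i) 2) (fun i => ?_) (fun i => ?_)
      (fun i j hij => ?_) hq
    · rw [integral_indicator_one (hA i), hp]
    · rw [← covariance_self (memLp_indicator_one (hA i) 2).aemeasurable,
        covariance_indicator_one (hA i) (hA i), Set.inter_self, hp]
      linarith [mul_self_nonneg p]
    · beta_reduce
      rw [covariance_indicator_one (hA i) (hA j), hp, hp]
      linarith [hinter hij]
  have hsplit : {i | a ∈ A i}.Infinite ∨ {i | a ∉ A i}.Infinite := by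
    rw [← Set.infinite_union]
    convert Set.infinite_univ (α := ℕ)
    ext i
    simp [em]
  rcases hsplit with hmem | hnotMem
  · exact Or.inr (hdeviation hmem fun i hi => Set.indicator_of_mem hi 1)
  · left
    simpa using hdeviation hnotMem fun i hi => Set.indicator_of_notMem hi 1

lemma eq_zero_or_eq_one_of_forall_exists_inter_le [IsProbabilityMeasure μ] {p : ℝ} {a : Ω}
    (ha : μ {a} ≠ 0) (h : ∀ ε > 0, ∃ A : ℕ → Set Ω, (∀ i, MeasurableSet (A i)) ∧
      (∀ i, μ.real (A i) = p) ∧ Pairwise fun i j => μ.real (A i ∩ A j) ≤ p ^ 2 + ε) :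
    p = 0 ∨ p = 1 := by
  have ha' : 0 < μ.real {a} := ENNReal.toReal_pos ha (measure_ne_top _ _)
  by_contra! hp
  have hp' : 1 - p ≠ 0 := sub_ne_zero.2 hp.2.symm
  obtain ⟨ε, hε, hlt⟩ := exists_between
    (show 0 < min (μ.real {a} * p ^ 2) (μ.real {a} * (1 - p) ^ 2) by
      have := hp.1
      positivity)
  obtain ⟨A, hA, hAp, hinter⟩ := h ε hε
  rw [lt_min_iff] at hlt
  rcases measureReal_singleton_mul_le_of_inter_le hA hAp hε.le hinter a with hle | hle <;>
    linarith

end SecondMoment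

section SubgroupSpace

variable {G : Type*} [Group G]

lemma mem_conjSub {g x : G} {H : Subgroup G} : x ∈ conjSub g H ↔ g⁻¹ * x * g ∈ H := by
  rw [conjSub, Subgroup.mem_map_equiv]
  simp

lemma conjSub_preimage_NSet (g : G) (F : Set G) :
    conjSub g ⁻¹' NSet F = NSet ((fun d => g⁻¹ * d * g) '' F) := by
  ext H
  simp [NSet, Set.subset_def, mem_conjSub]

lemma NSet_union (F F' : Set G) : NSet (F ∪ F') = NSet F ∩ NSet F' :=
  Set.ext fun _ => Set.union_subset_iff

lemma NSet_singleton (x : G) : NSet {x} = {H : Subgroup G | x ∈ H} :=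
  Set.ext fun _ => Set.singleton_subset_iff

lemma continuous_decide_mem (x : G) :
    Continuous fun H : Subgroup G => @decide (x ∈ H) (Classical.dec _) :=
  (continuous_apply x).comp (continuous_induced_dom
    (f := fun (H : Subgroup G) (g : G) => @decide (g ∈ H) (Classical.dec _)))

lemma isClopen_setOf_mem (x : G) : IsClopen {H : Subgroup G | x ∈ H} := by
  have hpre : {H : Subgroup G | x ∈ H} =
      (fun H => @decide (x ∈ H) (Classical.dec _)) ⁻¹' {true} := by
    ext H
    simp
  rw [hpre]
  exact (isClopen_discrete _).preimage (continuous_decide_mem x)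

lemma measurableSet_setOf_mem (x : G) : MeasurableSet {H : Subgroup G | x ∈ H} :=
  (isClopen_setOf_mem x).isClosed.measurableSet

lemma measurableSet_NSet (F : Set G) : MeasurableSet (NSet F) := by
  have hNSet : NSet F = ⋂ x ∈ F, {H : Subgroup G | x ∈ H} := by
    ext H
    simp [NSet, Set.subset_def]
  rw [hNSet]
  exact (isClosed_biInter fun x _ => (isClopen_setOf_mem x).isClosed).measurableSet

lemma continuous_conjSub (g : G) : Continuous (conjSub g) := by
  refine continuous_induced_rng.2 (continuous_pi fun x => ?_)
  convert continuous_decide_mem (g⁻¹ * x * g) using 3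
  simp [mem_conjSub]

lemma IsIRS.measurePreserving_conjSub {θ : Measure (Subgroup G)} (hθ : IsIRS θ) (g : G) :
    MeasurePreserving (conjSub g) θ θ :=
  ⟨(continuous_conjSub g).measurable, hθ.2 g⟩

lemma eq_dirac_of_forall_measure_mem [Countable G] {μ : Measure (Subgroup G)}
    [IsProbabilityMeasure μ] {K : Subgroup G}
    (hzero_one : ∀ x, μ {H | x ∈ H} = 0 ∨ μ {H | x ∈ H} = 1)
    (hK : ∀ x, x ∈ K ↔ μ {H | x ∈ H} = 1) : μ = Measure.dirac K := by
  have hmem (x : G) : ∀ᵐ H ∂μ, x ∈ H ↔ x ∈ K := by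
    rcases hzero_one x with h | h
    · have hx : x ∉ K := fun hx => zero_ne_one (h.symm.trans ((hK x).1 hx))
      filter_upwards [measure_eq_zero_iff_ae_notMem.1 h] with H hH using iff_of_false hH hx
    · filter_upwards [(mem_ae_iff_prob_eq_one (measurableSet_setOf_mem x)).2 h] with H hH
        using iff_of_true hH ((hK x).2 h)
  have hae : id =ᵐ[μ] fun _ => K :=
    (ae_all_iff.2 hmem).mono fun H hH => Subgroup.ext hH
  simpa using (hasLaw_dirac_of_ae_eq hae).map_eq

end SubgroupSpace

section Coinduction

variable {Δ : Type*} [Group Δ] {Γ : Subgroup Δ} {θ : Measure (Subgroup Γ)}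

lemma NpullSet_eq_NSet (S : Set Δ) : NpullSet Γ S = NSet ((↑) ⁻¹' S) :=
  rfl

lemma measurableSet_NpullSet (S : Set Δ) : MeasurableSet (NpullSet Γ S) :=
  measurableSet_NSet _

lemma conjSub_preimage_NpullSet (γ : Γ) (S : Set Δ) :
    conjSub γ ⁻¹' NpullSet Γ S = NpullSet Γ ((fun d => (γ : Δ)⁻¹ * d * γ) '' S) := by
  rw [NpullSet_eq_NSet, conjSub_preimage_NSet, NpullSet_eq_NSet]
  congr 1
  ext x
  constructor
  · rintro ⟨y, hy, rfl⟩
    exact ⟨y, hy, rfl⟩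
  · rintro ⟨d, hd, hdx⟩
    have hd_eq : d = γ * x * (γ : Δ)⁻¹ := by
      rw [← hdx]
      group
    exact ⟨γ * x * γ⁻¹, by simpa [← hd_eq] using hd, by group⟩

lemma mem_kerIRS [IsProbabilityMeasure θ] {x : Γ} :
    x ∈ kerIRS Γ θ ↔ θ {Λ : Subgroup Γ | x ∈ Λ} = 1 := by
  refine ⟨fun hx => ?_, fun hx => Subgroup.subset_closure hx⟩
  suffices hae : ∀ᵐ Λ ∂θ, x ∈ Λ from (mem_ae_iff_prob_eq_one (measurableSet_setOf_mem x)).1 hae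
  induction hx using Subgroup.closure_induction with
  | mem x hx => exact (mem_ae_iff_prob_eq_one (measurableSet_setOf_mem x)).2 hx
  | one => exact univ_mem' fun Λ => Λ.one_mem
  | mul x y _ _ hx hy => filter_upwards [hx, hy] with Λ using Λ.mul_mem
  | inv x _ hx => filter_upwards [hx] with Λ using Λ.inv_mem

variable (Γ θ) in
/-- The factor `θ(N_{t⁻¹Ft})` of the coset `c = tΓ` in the product formula for the co-induced
measure of `N_F`. It is evaluated at the representative `c.out`; for conjugation-invariant `θ`
every representative gives the same value (`coindFactor_mk`). -/
noncomputable def coindFactor (F : Set Δ) (c : Δ ⧸ Γ) : ENNReal :=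
  θ (NpullSet Γ ((fun d => c.out⁻¹ * d * c.out) '' F))

lemma coindFactor_le_one [IsProbabilityMeasure θ] (F : Set Δ) (c : Δ ⧸ Γ) :
    coindFactor Γ θ F c ≤ 1 :=
  prob_le_one

lemma coindFactor_anti {F F' : Set Δ} (h : F ⊆ F') (c : Δ ⧸ Γ) :
    coindFactor Γ θ F' c ≤ coindFactor Γ θ F c :=
  measure_mono fun _ hΛ x hx => hΛ x (Set.image_mono h hx)

lemma coindFactor_mk (hθ : IsIRS θ) (F : Set Δ) (d : Δ) :
    coindFactor Γ θ F d = θ (NpullSet Γ ((fun y => d⁻¹ * y * d) '' F)) := by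
  obtain ⟨γ, hγ⟩ := QuotientGroup.mk_out_eq_mul Γ d
  rw [coindFactor, hγ, ← (hθ.measurePreserving_conjSub γ).measure_preimage
    (measurableSet_NpullSet ((fun y => d⁻¹ * y * d) '' F)).nullMeasurableSet,
    conjSub_preimage_NpullSet, Set.image_image]
  simp only [mul_inv_rev, mul_assoc]

lemma coindFactor_image_conj (hθ : IsIRS θ) (F : Set Δ) (g : Δ) (c : Δ ⧸ Γ) :
    coindFactor Γ θ ((fun d => g⁻¹ * d * g) '' F) c = coindFactor Γ θ F (g • c) := by
  induction c using QuotientGroup.induction_on with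
  | H d =>
    rw [MulAction.Quotient.smul_coe, smul_eq_mul, coindFactor_mk hθ, coindFactor_mk hθ,
      Set.image_image]
    simp only [mul_inv_rev, mul_assoc]

lemma coindFactor_singleton_mk (hθ : IsIRS θ) {x d : Δ} (hx : d⁻¹ * x * d ∈ Γ) :
    coindFactor Γ θ {x} d = θ {Λ : Subgroup Γ | ⟨d⁻¹ * x * d, hx⟩ ∈ Λ} := by
  rw [coindFactor_mk hθ, Set.image_singleton, NpullSet_eq_NSet, ← NSet_singleton]
  congr 2
  ext y
  simp [Subtype.ext_iff]

lemma mem_normalCore_iff_forall_conj_inv {K : Subgroup Δ} {x : Δ} :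
    x ∈ K.normalCore ↔ ∀ d : Δ, d⁻¹ * x * d ∈ K :=
  ⟨fun hx d => by simpa using hx d⁻¹, fun hx d => by simpa using hx d⁻¹⟩

lemma mem_coreKer_iff (hθ : IsIRS θ) {x : Δ} :
    x ∈ coreKer Γ θ ↔ x ∈ Γ.normalCore ∧ ∀ c, coindFactor Γ θ {x} c = 1 := by
  have := hθ.1
  have hconj (d : Δ) : d⁻¹ * x * d ∈ (kerIRS Γ θ).map Γ.subtype ↔
      d⁻¹ * x * d ∈ Γ ∧ coindFactor Γ θ {x} d = 1 := by
    rw [Subgroup.mem_map]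
    constructor
    · rintro ⟨y, hy, hyx⟩
      have hx : d⁻¹ * x * d ∈ Γ := hyx ▸ y.2
      refine ⟨hx, ?_⟩
      rw [coindFactor_singleton_mk hθ hx, ← mem_kerIRS]
      convert hy
      exact hyx.symm
    · rintro ⟨hx, hfactor⟩
      rw [coindFactor_singleton_mk hθ hx, ← mem_kerIRS] at hfactor
      exact ⟨_, hfactor, rfl⟩
  rw [coreKer, mem_normalCore_iff_forall_conj_inv, mem_normalCore_iff_forall_conj_inv,
    QuotientGroup.forall_mk, ← forall_and]
  exact forall_congr' hconj

lemma IsLeftTransversal.isComplement {T : Set Δ} (hT : IsLeftTransversal Γ T) :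
    Subgroup.IsComplement T Γ := by
  refine Subgroup.isComplement_iff_existsUnique_inv_mul_mem.2 fun d => ?_
  obtain ⟨t, ⟨htT, ht⟩, huniq⟩ := hT d
  refine ⟨⟨t, htT⟩, by simpa using Γ.inv_mem ht, fun s hs => Subtype.ext (huniq s ⟨s.2, ?_⟩)⟩
  simpa using Γ.inv_mem hs

section CindSpec

variable {T : Set Δ} {ν : Measure (Subgroup Δ)}

lemma CindSpec.measure_NSet_eq_tprod (hc : CindSpec Γ T θ ν) (hθ : IsIRS θ)
    (hT : IsLeftTransversal Γ T) {F : Finset Δ} (hF : (F : Set Δ) ⊆ Γ.normalCore) :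
    ν (NSet F) = ∏' c, coindFactor Γ θ F c := by
  rw [(hc F).2 hF, ← hT.isComplement.leftQuotientEquiv.symm.tprod_eq]
  exact tprod_congr fun t => (coindFactor_mk hθ _ _).symm

lemma CindSpec.hasProd_coindFactor (hc : CindSpec Γ T θ ν) (hθ : IsIRS θ)
    (hT : IsLeftTransversal Γ T) {F : Finset Δ} (hF : (F : Set Δ) ⊆ Γ.normalCore) :
    HasProd (coindFactor Γ θ F) (ν (NSet F)) := by
  have := hθ.1
  rw [hc.measure_NSet_eq_tprod hθ hT hF]
  exact (ENNReal.hasProd_iInf_prod (coindFactor_le_one _)).multipliable.hasProd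

lemma CindSpec.measure_NSet_le_prod (hc : CindSpec Γ T θ ν) (hθ : IsIRS θ)
    (hT : IsLeftTransversal Γ T) (F : Finset Δ) (S : Finset (Δ ⧸ Γ)) :
    ν (NSet F) ≤ ∏ c ∈ S, coindFactor Γ θ F c := by
  have := hθ.1
  by_cases hF : (F : Set Δ) ⊆ Γ.normalCore
  · rw [hc.measure_NSet_eq_tprod hθ hT hF, ENNReal.tprod_eq_iInf_prod (coindFactor_le_one _)]
    exact iInf_le _ S
  · simp [(hc F).1 hF]

lemma CindSpec.measure_NSet_eq_one_iff (hc : CindSpec Γ T θ ν) (hθ : IsIRS θ)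
    (hT : IsLeftTransversal Γ T) {F : Finset Δ} :
    ν (NSet F) = 1 ↔ (F : Set Δ) ⊆ Γ.normalCore ∧ ∀ c, coindFactor Γ θ F c = 1 := by
  have := hθ.1
  constructor
  · intro hone
    refine ⟨?_, fun c => ?_⟩
    · by_contra hF
      exact zero_ne_one (((hc F).1 hF).symm.trans hone)
    · refine (coindFactor_le_one _ c).antisymm ?_
      simpa [hone] using hc.measure_NSet_le_prod hθ hT F {c}
  · rintro ⟨hF, hfactor⟩
    simp [hc.measure_NSet_eq_tprod hθ hT hF, hfactor]

lemma CindSpec.mem_coreKer_iff_measure_eq_one (hc : CindSpec Γ T θ ν) (hθ : IsIRS θ)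
    (hT : IsLeftTransversal Γ T) {x : Δ} : x ∈ coreKer Γ θ ↔ ν {H | x ∈ H} = 1 := by
  rw [mem_coreKer_iff hθ, ← NSet_singleton, ← Finset.coe_singleton,
    hc.measure_NSet_eq_one_iff hθ hT]
  simp

lemma CindSpec.measure_NSet_inter_le (hc : CindSpec Γ T θ ν) (hθ : IsIRS θ)
    (hT : IsLeftTransversal Γ T) (F F' : Finset Δ) {S S' : Finset (Δ ⧸ Γ)} (hSS' : Disjoint S S') :
    ν (NSet F ∩ NSet F') ≤
      (∏ c ∈ S, coindFactor Γ θ F c) * ∏ c ∈ S', coindFactor Γ θ F' c := by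
  classical
  calc ν (NSet F ∩ NSet F')
      = ν (NSet (F ∪ F' : Finset Δ)) := by rw [Finset.coe_union, NSet_union]
    _ ≤ ∏ c ∈ S ∪ S', coindFactor Γ θ (F ∪ F' : Finset Δ) c := hc.measure_NSet_le_prod hθ hT _ _
    _ = (∏ c ∈ S, coindFactor Γ θ (F ∪ F' : Finset Δ) c) *
          ∏ c ∈ S', coindFactor Γ θ (F ∪ F' : Finset Δ) c := Finset.prod_union hSS'
    _ ≤ _ := mul_le_mul'
        (Finset.prod_le_prod' fun c _ => coindFactor_anti (by simp) c)
        (Finset.prod_le_prod' fun c _ => coindFactor_anti (by simp) c)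

lemma CindSpec.measure_conjSub_preimage_inter_le (hc : CindSpec Γ T θ ν) (hθ : IsIRS θ)
    (hT : IsLeftTransversal Γ T) (F : Finset Δ) (S : Finset (Δ ⧸ Γ)) {g h : Δ}
    (hgh : Disjoint (g • (S : Set (Δ ⧸ Γ))) (h • (S : Set (Δ ⧸ Γ)))) :
    ν (conjSub g⁻¹ ⁻¹' NSet F ∩ conjSub h⁻¹ ⁻¹' NSet F) ≤ (∏ c ∈ S, coindFactor Γ θ F c) ^ 2 := by
  classical
  have hprod (k : Δ) : ∏ c ∈ k • S,
      coindFactor Γ θ (F.image fun d => k⁻¹⁻¹ * d * k⁻¹ : Finset Δ) c =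
        ∏ c ∈ S, coindFactor Γ θ F c := by
    rw [Finset.coe_image, ← Finset.image_smul, Finset.prod_image (MulAction.injective k).injOn]
    exact Finset.prod_congr rfl fun c _ => by rw [coindFactor_image_conj hθ, inv_smul_smul]
  have hdisj : Disjoint (g • S) (h • S) := by
    rw [← Finset.disjoint_coe, Finset.coe_smul_finset, Finset.coe_smul_finset]
    exact hgh
  rw [conjSub_preimage_NSet, conjSub_preimage_NSet, ← Finset.coe_image, ← Finset.coe_image, sq]
  exact (hc.measure_NSet_inter_le hθ hT _ _ hdisj).trans_eq (by rw [hprod, hprod])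

lemma CindSpec.exists_seq_measureReal_inter_le [Infinite (Δ ⧸ Γ)] (hc : CindSpec Γ T θ ν)
    (hθ : IsIRS θ) (hT : IsLeftTransversal Γ T) {F : Finset Δ}
    (hF : (F : Set Δ) ⊆ Γ.normalCore) {ε : ℝ} (hε : 0 < ε) :
    ∃ g : ℕ → Δ, Pairwise fun i j =>
      ν.real (conjSub (g i) ⁻¹' NSet F ∩ conjSub (g j) ⁻¹' NSet F) ≤ ν.real (NSet F) ^ 2 + ε := by
  have := hθ.1
  have hprod_ne_top (S : Finset (Δ ⧸ Γ)) : ∏ c ∈ S, coindFactor Γ θ F c ≠ ⊤ :=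
    ENNReal.prod_ne_top fun c _ => measure_ne_top _ _
  have hν_ne_top : ν (NSet F) ≠ ⊤ :=
    ne_top_of_le_ne_top (hprod_ne_top ∅) (hc.measure_NSet_le_prod hθ hT F ∅)
  have hlim : Tendsto (fun S : Finset (Δ ⧸ Γ) => (∏ c ∈ S, coindFactor Γ θ F c).toReal ^ 2) atTop
      (𝓝 (ν.real (NSet F) ^ 2)) :=
    ((ENNReal.tendsto_toReal hν_ne_top).comp (hc.hasProd_coindFactor hθ hT hF)).pow 2
  obtain ⟨S, hS⟩ := (hlim.eventually_lt_const (lt_add_of_pos_right _ hε)).exists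
  obtain ⟨g, hg⟩ := exists_seq_pairwise_disjoint_smul (G := Δ) S.finite_toSet fun c _ => by
    rw [MulAction.orbit_eq_univ]
    exact Set.infinite_univ
  refine ⟨fun i => (g i)⁻¹, fun i j hij => le_trans ?_ hS.le⟩
  rw [← ENNReal.toReal_pow]
  exact ENNReal.toReal_mono (ENNReal.pow_ne_top (hprod_ne_top S))
    (hc.measure_conjSub_preimage_inter_le hθ hT F S (hg hij))

lemma CindSpec.measureReal_NSet_eq_zero_or_one [Infinite (Δ ⧸ Γ)] (hc : CindSpec Γ T θ ν)
    (hθ : IsIRS θ) (hT : IsLeftTransversal Γ T) (hν : IsIRS ν) {H : Subgroup Δ} (hH : ν {H} ≠ 0)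
    (F : Finset Δ) : ν.real (NSet F) = 0 ∨ ν.real (NSet F) = 1 := by
  have := hν.1
  by_cases hF : (F : Set Δ) ⊆ Γ.normalCore
  · refine eq_zero_or_eq_one_of_forall_exists_inter_le hH fun ε hε => ?_
    obtain ⟨g, hg⟩ := hc.exists_seq_measureReal_inter_le hθ hT hF hε
    refine ⟨fun i => conjSub (g i) ⁻¹' NSet F, fun i => ?_, fun i => ?_, hg⟩
    · exact (continuous_conjSub (g i)).measurable (measurableSet_NSet _)
    · exact (hν.measurePreserving_conjSub (g i)).measureReal_preimage
        (measurableSet_NSet _).nullMeasurableSet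
  · left
    simp [Measure.real, (hc F).1 hF]

end CindSpec

end Coinduction

/-- If `[Δ : Γ] = ∞` and the co-induced IRS `CIND_Γ^Δ(θ)` has an atom, then it is the Dirac
measure at the subgroup `core_Δ(ker(θ))`. -/
theorem coinduced_IRS_atomic_dirac {Δ : Type*} [Group Δ] [Countable Δ] (Γ : Subgroup Δ)
    (hinf : Infinite (Δ ⧸ Γ))
    (θ : Measure (Subgroup ↥Γ)) (hθ : IsIRS θ)
    (T : Set Δ) (hT : IsLeftTransversal Γ T)
    (ν : Measure (Subgroup Δ)) (hν : IsIRS ν) (hc : CindSpec Γ T θ ν)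
    (hatom : ∃ H : Subgroup Δ, ν {H} ≠ 0) :
    ν = Measure.dirac (coreKer Γ θ) := by
  have := hν.1
  obtain ⟨H, hH⟩ := hatom
  refine eq_dirac_of_forall_measure_mem (fun x => ?_)
    fun x => hc.mem_coreKer_iff_measure_eq_one hθ hT
  rw [← NSet_singleton, ← Finset.coe_singleton]
  exact (hc.measureReal_NSet_eq_zero_or_one hθ hT hν hH {x}).imp
    (measureReal_eq_zero_iff).1 (ENNReal.toReal_eq_one_iff _).1

end IRSPaper
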